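/- arXiv:1505.04137 — 2 statements merged into one kernel-verified Lean document; each statement's English description precedes it below -/
import Mathlib

section
/- Let n ≥ 2 and τ ∈ (0,1). For every p in the probability simplex Δ_n and every u ∈ R^n, Σ_{y} p_y ψ^CS(y,u) − inf_{u'∈R^n} Σ_y p_y ψ^CS(y,u') ≥ 2 min(τ, 1−τ) · ( p·ℓ_{pred^CS_τ(u)} − min_{t∈[n+1]} p·ℓ_t ), where ℓ = ℓ^{1/2} is the abstain(1/2) loss. -/
open scoped BigOperators

/-- The abstain(1/2) loss is `abstainLoss n (1/2)`. -/
noncomputable def abstainLoss (n : ℕ) (α : ℝ) (y : Fin n) (t : Fin (n + 1)) : ℝ :=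
  if t = Fin.last n then α else if (t : ℕ) = (y : ℕ) then 0 else 1

/-- Crammer–Singer surrogate: `ψ^CS(y,u) = max(0, max_{j≠y} u_j − u_y + 1)`. -/
noncomputable def psiCS (n : ℕ) (y : Fin n) (u : Fin n → ℝ) : ℝ :=
  max ((⨆ j : {j : Fin n // j ≠ y}, u j.1) - u y + 1) 0

/-- The largest component of `u`. -/
noncomputable def top1 (n : ℕ) (u : Fin n → ℝ) : ℝ := ⨆ i, u i

/-- The second-largest component of `u` (descending order, with multiplicity). -/
noncomputable def top2 (n : ℕ) (u : Fin n → ℝ) : ℝ :=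
  ⨅ i, ⨆ j : {j : Fin n // j ≠ i}, u j.1

/-- `pred^CS_τ`: an index attaining `max_i u_i` if `u_(1) − u_(2) > τ` (the maximizer is
unique in this case), and `n+1` otherwise. -/
noncomputable def predCS (n : ℕ) (τ : ℝ) (u : Fin n → ℝ) : Fin (n + 1) :=
  if h : (τ < top1 n u - top2 n u) ∧ ∃ y : Fin n, ∀ i, u i ≤ u y then
    Fin.castSucc h.2.choose
  else Fin.last n

lemma psiCS_nonneg (n : ℕ) (y : Fin n) (u : Fin n → ℝ) : 0 ≤ psiCS n y u :=
  le_max_right _ _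

lemma nonempty_ne {n : ℕ} (hn : 2 ≤ n) (y : Fin n) : Nonempty {j : Fin n // j ≠ y} := by
  have : Nontrivial (Fin n) := Fin.nontrivial_iff_two_le.mpr hn
  obtain ⟨j, hj⟩ := exists_ne y
  exact ⟨⟨j, hj⟩⟩

lemma le_iSup_ne {n : ℕ} {y j : Fin n} (u : Fin n → ℝ) (hj : j ≠ y) :
    u j ≤ ⨆ i : {i : Fin n // i ≠ y}, u i.1 :=
  le_ciSup (f := fun i : {i : Fin n // i ≠ y} => u i.1) (Set.finite_range _).bddAbove ⟨j, hj⟩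

lemma psiCS_le {n : ℕ} (hn : 2 ≤ n) {y : Fin n} {u : Fin n → ℝ} {c : ℝ} (hc : 0 ≤ c)
    (h : ∀ j, j ≠ y → u j - u y + 1 ≤ c) : psiCS n y u ≤ c := by
  have := nonempty_ne hn y
  have hsup : (⨆ j : {j : Fin n // j ≠ y}, u j.1) ≤ c + u y - 1 :=
    ciSup_le fun j => by linarith [h j.1 j.2]
  exact max_le (by linarith) hc

lemma top1_eq {n : ℕ} {u : Fin n → ℝ} {y : Fin n} (hy : ∀ i, u i ≤ u y) : top1 n u = u y := by
  have : Nonempty (Fin n) := ⟨y⟩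
  exact le_antisymm (ciSup_le hy) (le_ciSup (Set.finite_range u).bddAbove y)

lemma top2_eq {n : ℕ} (hn : 2 ≤ n) {u : Fin n → ℝ} {y : Fin n} (hy : ∀ i, u i ≤ u y) :
    top2 n u = ⨆ j : {j : Fin n // j ≠ y}, u j.1 := by
  have : Nonempty (Fin n) := ⟨y⟩
  have := nonempty_ne hn y
  refine le_antisymm (ciInf_le (Set.finite_range _).bddBelow y) (le_ciInf fun i => ?_)
  by_cases h : i = y
  · rw [h]
  · exact le_trans (ciSup_le fun j : {j : Fin n // j ≠ y} => hy j.1) (le_iSup_ne u (Ne.symm h))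

lemma top2_le_top1 {n : ℕ} (hn : 2 ≤ n) {u : Fin n → ℝ} {y : Fin n} (hy : ∀ i, u i ≤ u y) :
    top2 n u ≤ top1 n u := by
  have := nonempty_ne hn y
  rw [top1_eq hy, top2_eq hn hy]
  exact ciSup_le fun j => hy j.1

lemma psiCS_argmax {n : ℕ} (hn : 2 ≤ n) {u : Fin n → ℝ} {y : Fin n} (hy : ∀ i, u i ≤ u y) :
    psiCS n y u = max (1 - (top1 n u - top2 n u)) 0 := by
  rw [psiCS, top1_eq hy, top2_eq hn hy]
  congr 1
  ring

lemma le_psiCS_of_ne_argmax {n : ℕ} (hn : 2 ≤ n) {u : Fin n → ℝ} {y i : Fin n}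
    (hy : ∀ i, u i ≤ u y) (hi : i ≠ y) : 1 + (top1 n u - top2 n u) ≤ psiCS n i u := by
  have h1 := le_iSup_ne u hi
  have h2 := le_iSup_ne u hi.symm
  rw [top1_eq hy, top2_eq hn hy]
  exact le_trans (by linarith) (le_max_left _ _)

/-- A sum weighted by a probability vector, bounded below by separating one index. -/
lemma le_sum_mul_of_ne {n : ℕ} {p f : Fin n → ℝ} (hp0 : ∀ i, 0 ≤ p i) (hp1 : ∑ i, p i = 1)
    {y : Fin n} {a b : ℝ} (ha : a ≤ f y) (hb : ∀ i, i ≠ y → b ≤ f i) :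
    p y * a + (1 - p y) * b ≤ ∑ i, p i * f i := by
  have h : ∑ i, p i * (if i = y then a else b) = p y * a + (1 - p y) * b := by
    rw [← hp1, ← Finset.add_sum_erase _ _ (Finset.mem_univ y),
      ← Finset.add_sum_erase _ p (Finset.mem_univ y), add_sub_cancel_left, Finset.sum_mul]
    simp only [if_true]
    congr 1
    exact Finset.sum_congr rfl fun i hi => by rw [if_neg (Finset.ne_of_mem_erase hi)]
  rw [← h]
  refine Finset.sum_le_sum fun i _ => mul_le_mul_of_nonneg_left ?_ (hp0 i)
  split_ifs with hi
  · rwa [hi]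
  · exact hb i hi

lemma sum_mul_le_of_ne {n : ℕ} {p f : Fin n → ℝ} (hp0 : ∀ i, 0 ≤ p i) (hp1 : ∑ i, p i = 1)
    {y : Fin n} {a b : ℝ} (ha : f y ≤ a) (hb : ∀ i, i ≠ y → f i ≤ b) :
    ∑ i, p i * f i ≤ p y * a + (1 - p y) * b := by
  have h := le_sum_mul_of_ne (f := fun i => -f i) hp0 hp1 (neg_le_neg ha)
    fun i hi => neg_le_neg (hb i hi)
  simp only [mul_neg, Finset.sum_neg_distrib] at h
  linarith

lemma iInf_sum_psiCS_le {n : ℕ} {p : Fin n → ℝ} (hp0 : ∀ i, 0 ≤ p i) (u : Fin n → ℝ) :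
    (⨅ u' : Fin n → ℝ, ∑ y, p y * psiCS n y u') ≤ ∑ y, p y * psiCS n y u :=
  ciInf_le ⟨0, by
    rintro _ ⟨v, rfl⟩
    exact Finset.sum_nonneg fun i _ => mul_nonneg (hp0 i) (psiCS_nonneg n i v)⟩ u

lemma iInf_sum_psiCS_le_one {n : ℕ} (hn : 2 ≤ n) {p : Fin n → ℝ} (hp0 : ∀ i, 0 ≤ p i)
    (hp1 : ∑ i, p i = 1) : (⨅ u' : Fin n → ℝ, ∑ y, p y * psiCS n y u') ≤ 1 := by
  refine (iInf_sum_psiCS_le hp0 0).trans ?_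
  rw [← hp1]
  refine Finset.sum_le_sum fun i _ => mul_le_of_le_one_right (hp0 i) ?_
  exact psiCS_le hn zero_le_one fun j _ => by simp

lemma iInf_sum_psiCS_le_two_mul {n : ℕ} (hn : 2 ≤ n) {p : Fin n → ℝ} (hp0 : ∀ i, 0 ≤ p i)
    (hp1 : ∑ i, p i = 1) (k : Fin n) :
    (⨅ u' : Fin n → ℝ, ∑ y, p y * psiCS n y u') ≤ 2 * (1 - p k) := by
  refine (iInf_sum_psiCS_le hp0 (Pi.single k 1)).trans
    ((sum_mul_le_of_ne hp0 hp1 (y := k) (a := 0) (b := 2) ?_ ?_).trans_eq (by ring))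
  · exact psiCS_le hn le_rfl fun j hj => by simp [hj]
  · refine fun i hi => psiCS_le hn zero_le_two fun j _ => ?_
    rw [Pi.single_eq_of_ne hi]
    rcases eq_or_ne j k with rfl | hj
    · norm_num
    · rw [Pi.single_eq_of_ne hj]
      norm_num

lemma sum_abstainLoss_last {n : ℕ} {p : Fin n → ℝ} (hp1 : ∑ i, p i = 1) (α : ℝ) :
    ∑ y, p y * abstainLoss n α y (Fin.last n) = α := by
  simp [abstainLoss, ← Finset.sum_mul, hp1]

lemma sum_abstainLoss_castSucc {n : ℕ} {p : Fin n → ℝ} (hp0 : ∀ i, 0 ≤ p i)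
    (hp1 : ∑ i, p i = 1) (α : ℝ) (k : Fin n) :
    ∑ y, p y * abstainLoss n α y k.castSucc = 1 - p k := by
  have hk : abstainLoss n α k k.castSucc = 0 := by
    simp [abstainLoss, (Fin.castSucc_lt_last k).ne]
  have hne : ∀ i, i ≠ k → abstainLoss n α i k.castSucc = 1 := fun i hi => by
    simp [abstainLoss, (Fin.castSucc_lt_last k).ne, Fin.val_eq_val, hi.symm]
  refine le_antisymm ?_ ?_
  · exact (sum_mul_le_of_ne hp0 hp1 hk.le fun i hi => (hne i hi).le).trans_eq (by ring)
  · exact le_trans (by linarith)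
      (le_sum_mul_of_ne hp0 hp1 hk.ge fun i hi => (hne i hi).ge)

lemma predCS_eq {n : ℕ} (hn : 2 ≤ n) (τ : ℝ) (u : Fin n → ℝ) :
    ∃ y : Fin n, (∀ i, u i ≤ u y) ∧
      ((τ < top1 n u - top2 n u ∧ predCS n τ u = y.castSucc) ∨
        (top1 n u - top2 n u ≤ τ ∧ predCS n τ u = Fin.last n)) := by
  have : Nonempty (Fin n) := ⟨⟨0, by omega⟩⟩
  have hex : ∃ y : Fin n, ∀ i, u i ≤ u y := Finite.exists_max u
  by_cases hτ : τ < top1 n u - top2 n u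
  · have h : (τ < top1 n u - top2 n u) ∧ ∃ y : Fin n, ∀ i, u i ≤ u y := ⟨hτ, hex⟩
    exact ⟨h.2.choose, h.2.choose_spec, Or.inl ⟨hτ, dif_pos h⟩⟩
  · obtain ⟨y, hy⟩ := hex
    exact ⟨y, hy, Or.inr ⟨not_lt.mp hτ, dif_neg fun h => hτ h.1⟩⟩

theorem psiCS_calibration (n : ℕ) (hn : 2 ≤ n) (τ : ℝ) (hτ0 : 0 < τ) (hτ1 : τ < 1)
    (p : Fin n → ℝ) (hp0 : ∀ i, 0 ≤ p i) (hp1 : ∑ i, p i = 1) (u : Fin n → ℝ) :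
    (∑ y, p y * psiCS n y u) - (⨅ u' : Fin n → ℝ, ∑ y, p y * psiCS n y u') ≥
      2 * min τ (1 - τ) *
        ((∑ y, p y * abstainLoss n (1/2) y (predCS n τ u)) -
          ⨅ t : Fin (n + 1), ∑ y, p y * abstainLoss n (1/2) y t) := by
  obtain ⟨y, hy, hpred⟩ := predCS_eq hn τ u
  have hm := sub_nonneg.mpr (top2_le_top1 hn hy)
  have hR := le_sum_mul_of_ne hp0 hp1 (psiCS_argmax hn hy).ge
    fun i hi => le_psiCS_of_ne_argmax hn hy hi
  set m := top1 n u - top2 n u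
  set R := ∑ y, p y * psiCS n y u
  set L : Fin (n + 1) → ℝ := fun t => ∑ y, p y * abstainLoss n (1/2) y t
  have hlast : L (Fin.last n) = 1 / 2 := sum_abstainLoss_last hp1 _
  have hcast : ∀ k : Fin n, L k.castSucc = 1 - p k := sum_abstainLoss_castSucc hp0 hp1 _
  have hq1 : p y ≤ 1 := hp1 ▸ Finset.single_le_sum (fun i _ => hp0 i) (Finset.mem_univ y)
  have hBhalf : ⨅ t, L t ≤ 1 / 2 :=
    hlast ▸ ciInf_le (Set.finite_range L).bddBelow (Fin.last n)
  have hIB : (⨅ u' : Fin n → ℝ, ∑ y, p y * psiCS n y u') ≤ 2 * ⨅ t, L t := by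
    obtain ⟨t, ht⟩ := exists_eq_ciInf_of_finite (f := L)
    rw [← ht]
    induction t using Fin.lastCases with
    | last =>
      rw [hlast]
      linarith [iInf_sum_psiCS_le_one hn hp0 hp1]
    | cast k =>
      rw [hcast]
      exact iInf_sum_psiCS_le_two_mul hn hp0 hp1 k
  have hB : 1 / 2 ≤ p y → 1 - p y ≤ ⨅ t, L t := fun hq => by
    refine le_ciInf fun t => ?_
    induction t using Fin.lastCases with
    | last =>
      rw [hlast]
      linarith
    | cast k =>
      rw [hcast]
      rcases eq_or_ne k y with rfl | hk
      · exact le_rfl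
      · have := Finset.add_le_sum (fun i _ => hp0 i) (Finset.mem_univ k) (Finset.mem_univ y) hk
        linarith
  set B := ⨅ t, L t
  set I := ⨅ u' : Fin n → ℝ, ∑ y, p y * psiCS n y u'
  change 2 * min τ (1 - τ) * (L (predCS n τ u) - B) ≤ R - I
  have hcτ : min τ (1 - τ) ≤ τ := min_le_left _ _
  have hcτ' : min τ (1 - τ) ≤ 1 - τ := min_le_right _ _
  have hc0 : 0 ≤ min τ (1 - τ) := le_min hτ0.le (by linarith)
  set c := min τ (1 - τ)
  have hR1 : 1 + m * (1 - 2 * p y) ≤ R := by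
    have := mul_le_mul_of_nonneg_left (le_max_left (1 - m) 0) (hp0 y)
    linarith
  have hR2 : (1 - p y) * (1 + m) ≤ R := by
    have := mul_nonneg (hp0 y) (le_max_right (1 - m) 0)
    linarith
  rcases hpred with ⟨hmτ, hp⟩ | ⟨hmτ, hp⟩
  · rw [hp, hcast]
    rcases le_total (1 / 2) (p y) with hq | hq
    · have h0 : c * (1 - p y - B) ≤ 0 :=
        mul_nonpos_of_nonneg_of_nonpos hc0 (by linarith [hB hq])
      have hyB : B ≤ 1 - p y := hcast y ▸ ciInf_le (Set.finite_range L).bddBelow y.castSucc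
      have hR3 : 2 * (1 - p y) ≤ R := by
        rcases le_total m 1 with h1 | h1 <;> nlinarith
      linarith
    · nlinarith
  · rw [hp, hlast]
    rcases le_total (1 / 2) (p y) with hq | hq
    · have hyB := hB hq
      have hyB' : B ≤ 1 - p y := hcast y ▸ ciInf_le (Set.finite_range L).bddBelow y.castSucc
      nlinarith
    · have : 0 ≤ m * (1 - 2 * p y) := mul_nonneg hm (by linarith)
      nlinarith
end

section
/- Let d ≥ 1, n = 2^d, B : [n] → {−1,+1}^d a bijection, α ∈ [0, 1/2], τ ∈ (0,1), X a measurable space, and D a probability measure on X × [n]. Then for every measurable f : X → R^d, er^{ℓ^α}_D[pred^BEP_τ ∘ f] − er^{ℓ^α,*}_D ≤ ( er^{ψ^{BEP,α}}_D[f] − er^{ψ^{BEP,α},*}_D ) / ( 2 min(τ, 1−τ) ). -/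
open scoped BigOperators
open MeasureTheory

/-- Generalized BEP surrogate. `B : Fin (2^d) ≃ (Fin d → Bool)` encodes a bijection
`[n] → {−1,+1}^d`, where `true ↦ +1` and `false ↦ −1`:
`ψ^{BEP,α}(y,u) = 2·max( α·max_j γ(B_j(y)u_j), (1−α)·max_j γ(B_j(y)u_j) ) + 2α`,
where `γ(a) = max(a,−1)`. -/
noncomputable def psiBEPa (d : ℕ) (B : Fin (2 ^ d) ≃ (Fin d → Bool)) (α : ℝ)
    (y : Fin (2 ^ d)) (u : Fin d → ℝ) : ℝ :=
  2 * max (α * ⨆ j, max ((if B y j then (1 : ℝ) else -1) * u j) (-1))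
      ((1 - α) * ⨆ j, max ((if B y j then (1 : ℝ) else -1) * u j) (-1)) + 2 * α

/-- The coordinatewise sign vector of `−u`, where `sign(a) = +1` (`true`) if `a ≥ 0`
and `−1` (`false`) if `a < 0`; so `sign(−u)_j = +1` iff `u j ≤ 0`. -/
noncomputable def signNeg (d : ℕ) (u : Fin d → ℝ) : Fin d → Bool :=
  fun j => decide (u j ≤ 0)

/-- `pred^BEP_τ(u)`: `n+1` if `min_j |u_j| ≤ τ`, and `B⁻¹(sign(−u))` otherwise. -/
noncomputable def predBEP (d : ℕ) (B : Fin (2 ^ d) ≃ (Fin d → Bool)) (τ : ℝ)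
    (u : Fin d → ℝ) : Fin (2 ^ d + 1) :=
  if (⨅ j, |u j|) ≤ τ then Fin.last (2 ^ d)
  else Fin.castSucc (B.symm (signNeg d u))

lemma lowerBound_psiBEPa {d : ℕ} (hd : 1 ≤ d) (B : Fin (2 ^ d) ≃ (Fin d → Bool))
    {α : ℝ} (hα0 : 0 ≤ α) (hα1 : α ≤ 1 / 2) (y : Fin (2 ^ d)) (u : Fin d → ℝ) :
    2 * (min (⨅ j, |u j|) 1 * abstainLoss (2 ^ d) α y (B.symm (signNeg d u)).castSucc +
      (1 - min (⨅ j, |u j|) 1) * α) ≤ psiBEPa d B α y u := by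
  have : Nonempty (Fin d) := ⟨⟨0, hd⟩⟩
  have hbdd : BddAbove (Set.range fun j => max ((if B y j then (1 : ℝ) else -1) * u j) (-1)) :=
    (Set.finite_range _).bddAbove
  have hm := fun j => le_ciSup hbdd j
  unfold psiBEPa
  set m := ⨆ j, max ((if B y j then (1 : ℝ) else -1) * u j) (-1)
  by_cases hy : y = B.symm (signNeg d u)
  · obtain ⟨j, hj⟩ := exists_eq_ciInf_of_finite (f := fun j => |u j|)
    have hj' : -min (⨅ j, |u j|) 1 ≤ m := by
      refine le_trans ?_ (hm j)
      rw [← hj, ← max_neg_neg]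
      refine max_le_max ?_ le_rfl
      have h1 := neg_abs_le (u j)
      have h2 := le_abs_self (u j)
      split_ifs <;> linarith
    have h0 : abstainLoss (2 ^ d) α y (B.symm (signNeg d u)).castSucc = 0 := by
      simp [abstainLoss, ← hy, Fin.castSucc_ne_last]
    rw [h0]
    have h3 := le_max_left (α * m) ((1 - α) * m)
    nlinarith [mul_le_mul_of_nonneg_left hj' hα0]
  · obtain ⟨j, hj⟩ : ∃ j, B y j ≠ signNeg d u j := by
      by_contra! h
      exact hy (by rw [← funext h, Equiv.symm_apply_apply])
    have hj' : min (⨅ j, |u j|) 1 ≤ m := by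
      have hq : ⨅ j, |u j| ≤ |u j| := ciInf_le (Set.finite_range _).bddBelow j
      refine (min_le_left _ _).trans (hq.trans (le_trans ?_ ((le_max_left _ _).trans (hm j))))
      by_cases hu : u j ≤ 0
      · have : B y j = false := by simpa [signNeg, hu] using hj
        simp [this, abs_of_nonpos hu]
      · have : B y j = true := by simpa [signNeg, hu] using hj
        simp [this, abs_of_pos (not_le.1 hu)]
    have h1 : abstainLoss (2 ^ d) α y (B.symm (signNeg d u)).castSucc = 1 := by
      simp [abstainLoss, Fin.castSucc_ne_last, ← Fin.ext_iff, Ne.symm hy]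
    rw [h1]
    have h3 := le_max_right (α * m) ((1 - α) * m)
    nlinarith [mul_le_mul_of_nonneg_left hj' (by linarith : 0 ≤ 1 - α)]

/-- The vector `0` for abstention, and `-B(y)` for the label `y`. -/
noncomputable def scoreBEP (d : ℕ) (B : Fin (2 ^ d) ≃ (Fin d → Bool)) :
    Fin (2 ^ d + 1) → Fin d → ℝ :=
  Fin.lastCases (fun _ => 0) (fun k j => if B k j then -1 else 1)

lemma psiBEPa_scoreBEP_le {d : ℕ} (hd : 1 ≤ d) (B : Fin (2 ^ d) ≃ (Fin d → Bool))
    {α : ℝ} (hα0 : 0 ≤ α) (hα1 : α ≤ 1 / 2) (y : Fin (2 ^ d)) (t : Fin (2 ^ d + 1)) :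
    psiBEPa d B α y (scoreBEP d B t) ≤ 2 * abstainLoss (2 ^ d) α y t := by
  have : Nonempty (Fin d) := ⟨⟨0, hd⟩⟩
  induction t using Fin.lastCases with
  | last => simp [scoreBEP, psiBEPa, abstainLoss]
  | cast k =>
    by_cases hy : k = y
    · subst hy
      have h (j : Fin d) : max ((if B k j then (1 : ℝ) else -1) * (if B k j then -1 else 1)) (-1)
          = -1 := by split_ifs <;> simp
      simp only [scoreBEP, psiBEPa, abstainLoss, Fin.lastCases_castSucc, h, ciSup_const]
      rw [max_eq_left (by linarith)]
      simp [Fin.castSucc_ne_last]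
    · have h : ⨆ j, max ((if B y j then (1 : ℝ) else -1) * (if B k j then -1 else 1)) (-1) ≤ 1 :=
        ciSup_le fun j => by split_ifs <;> norm_num
      simp only [scoreBEP, psiBEPa, abstainLoss, Fin.lastCases_castSucc, Fin.castSucc_ne_last,
        if_false, Fin.val_castSucc, ← Fin.ext_iff, hy]
      have h' : max (α * ⨆ j, max ((if B y j then (1 : ℝ) else -1) * (if B k j then -1 else 1)) (-1))
          ((1 - α) * ⨆ j, max ((if B y j then (1 : ℝ) else -1) * (if B k j then -1 else 1)) (-1))
          ≤ 1 - α := max_le (by nlinarith) (by nlinarith)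
      linarith

lemma abstainLoss_nonneg {n : ℕ} {α : ℝ} (hα : 0 ≤ α) (y : Fin n) (t : Fin (n + 1)) :
    0 ≤ abstainLoss n α y t := by
  unfold abstainLoss
  split_ifs <;> simp [hα]

/-- Randomizing between two deterministic predictors does not beat the best deterministic one. -/
lemma iInf_lintegral_le_lintegral_mix {X Y T : Type*} [MeasurableSpace X] [MeasurableSpace Y]
    [MeasurableSpace T] [DiscreteMeasurableSpace Y] [Countable Y]
    [DiscreteMeasurableSpace T] [Countable T]
    (D : Measure (X × Y)) [SFinite D] (L : Y → T → ENNReal) {w : X → ℝ} (hw : Measurable w)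
    (hw0 : ∀ x, 0 ≤ w x) (hw1 : ∀ x, w x ≤ 1) {k k' : X → T} (hk : Measurable k)
    (hk' : Measurable k') :
    (⨅ h : {h : X → T // Measurable h}, ∫⁻ z, L z.2 (h.1 z.1) ∂D) ≤
      ∫⁻ z, (ENNReal.ofReal (w z.1) * L z.2 (k z.1) +
        ENNReal.ofReal (1 - w z.1) * L z.2 (k' z.1)) ∂D := by
  classical
  have hmeas (s : ℝ) : Measurable fun x => if s < w x then k x else k' x :=
    Measurable.ite (measurableSet_lt measurable_const hw) hk hk'
  have hL : Measurable fun p : Y × T => L p.1 p.2 := Measurable.of_discrete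
  calc _ = ∫⁻ _ in Set.Ico (0 : ℝ) 1,
        (⨅ h : {h : X → T // Measurable h}, ∫⁻ z, L z.2 (h.1 z.1) ∂D) := by simp
    _ ≤ ∫⁻ s in Set.Ico (0 : ℝ) 1, ∫⁻ z, L z.2 (if s < w z.1 then k z.1 else k' z.1) ∂D :=
        lintegral_mono fun s => iInf_le_of_le ⟨_, hmeas s⟩ le_rfl
    _ = ∫⁻ z, (∫⁻ s in Set.Ico (0 : ℝ) 1, L z.2 (if s < w z.1 then k z.1 else k' z.1)) ∂D := by
        refine lintegral_lintegral_swap (Measurable.aemeasurable ?_)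
        refine hL.comp (Measurable.prodMk (by fun_prop) (Measurable.ite ?_ (by fun_prop)
          (by fun_prop)))
        exact measurableSet_lt (by fun_prop) (by fun_prop)
    _ = _ := by
        refine lintegral_congr fun z => ?_
        have h0 := hw0 z.1
        have h1 := hw1 z.1
        rw [← Set.Ico_union_Ico_eq_Ico h0 h1, lintegral_union measurableSet_Ico
          (Set.Ico_disjoint_Ico_same)]
        congr 1
        · rw [setLIntegral_congr_fun (g := fun _ => L z.2 (k z.1)) measurableSet_Ico
            fun s hs => by simp [hs.2]]
          simp [mul_comm]
        · rw [setLIntegral_congr_fun (g := fun _ => L z.2 (k' z.1)) measurableSet_Ico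
            fun s hs => by simp [not_lt.2 hs.1]]
          simp [mul_comm]

lemma measurable_signNeg (d : ℕ) : Measurable (signNeg d) := by
  refine measurable_pi_lambda _ fun j => measurable_to_bool ?_
  have : (fun u => signNeg d u j) ⁻¹' {true} = {u | u j ≤ 0} := by
    ext u
    simp [signNeg]
  rw [this]
  exact measurableSet_le (measurable_pi_apply j) measurable_const

lemma measurable_predBEP {d : ℕ} (B : Fin (2 ^ d) ≃ (Fin d → Bool)) (τ : ℝ) :
    Measurable (predBEP d B τ) :=
  Measurable.ite (measurableSet_le (.iInf fun j => (measurable_pi_apply j).abs) measurable_const)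
    measurable_const ((Measurable.of_discrete (f := fun b => (B.symm b).castSucc)).comp
      (measurable_signNeg d))

/-- The weight, in a mixture of the sign decoding and abstention, that together with a share
`c / 2` of the thresholded prediction reproduces the surrogate margin `q`. -/
noncomputable def mixWeight (c τ q : ℝ) : ℝ :=
  (2 * min q 1 - if q ≤ τ then 0 else c) / (2 - c)

lemma measurable_mixWeight (c τ : ℝ) : Measurable (mixWeight c τ) := by
  unfold mixWeight
  refine ((measurable_const.mul (measurable_id.min measurable_const)).sub
    (Measurable.ite measurableSet_Iic measurable_const measurable_const)).div_const _

lemma mixWeight_mem_Icc {c τ q : ℝ} (hc : 0 < c) (hcτ : c ≤ 2 * τ) (hcτ' : c ≤ 2 * (1 - τ))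
    (hq : 0 ≤ q) : mixWeight c τ q ∈ Set.Icc 0 1 := by
  have h2 : 0 < 2 - c := by linarith
  have hr : min q 1 ≤ 1 := min_le_right _ _
  have hr' : min q 1 ≤ q := min_le_left _ _
  have hr0 : 0 ≤ min q 1 := le_min hq zero_le_one
  unfold mixWeight
  split_ifs with h
  · exact ⟨div_nonneg (by linarith) h2.le, (div_le_one h2).2 (by linarith)⟩
  · have : τ ≤ min q 1 := le_min (not_le.1 h).le (by linarith)
    exact ⟨div_nonneg (by linarith) h2.le, (div_le_one h2).2 (by linarith)⟩

lemma mix_le_psiBEPa {d : ℕ} (hd : 1 ≤ d) (B : Fin (2 ^ d) ≃ (Fin d → Bool))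
    {α : ℝ} (hα0 : 0 ≤ α) (hα1 : α ≤ 1 / 2) {c : ℝ} (τ : ℝ) (hc : c < 2)
    (y : Fin (2 ^ d)) (u : Fin d → ℝ) :
    c * abstainLoss (2 ^ d) α y (predBEP d B τ u) + (2 - c) *
      (mixWeight c τ (⨅ j, |u j|) * abstainLoss (2 ^ d) α y (B.symm (signNeg d u)).castSucc +
        (1 - mixWeight c τ (⨅ j, |u j|)) * abstainLoss (2 ^ d) α y (Fin.last _)) ≤
      psiBEPa d B α y u := by
  refine le_trans (le_of_eq ?_) (lowerBound_psiBEPa hd B hα0 hα1 y u)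
  have hlast : abstainLoss (2 ^ d) α y (Fin.last _) = α := by simp [abstainLoss]
  have h2 : 2 - c ≠ 0 := by linarith
  unfold predBEP mixWeight
  split_ifs with h
  · rw [hlast]
    field_simp
    ring
  · rw [hlast]
    field_simp
    ring

theorem psiBEPa_excess_risk_bound (d : ℕ) (hd : 1 ≤ d)
    (B : Fin (2 ^ d) ≃ (Fin d → Bool))
    (α : ℝ) (hα0 : 0 ≤ α) (hα1 : α ≤ 1 / 2)
    (τ : ℝ) (hτ0 : 0 < τ) (hτ1 : τ < 1)
    {X : Type*} [MeasurableSpace X] (D : Measure (X × Fin (2 ^ d)))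
    [IsProbabilityMeasure D]
    (f : X → Fin d → ℝ) (hf : Measurable f) :
    (∫⁻ z, ENNReal.ofReal (abstainLoss (2 ^ d) α z.2 (predBEP d B τ (f z.1))) ∂D) -
      (⨅ h : {h : X → Fin (2 ^ d + 1) // Measurable h},
        ∫⁻ z, ENNReal.ofReal (abstainLoss (2 ^ d) α z.2 (h.1 z.1)) ∂D) ≤
    ((∫⁻ z, ENNReal.ofReal (psiBEPa d B α z.2 (f z.1)) ∂D) -
      (⨅ f' : {f' : X → Fin d → ℝ // Measurable f'},
        ∫⁻ z, ENNReal.ofReal (psiBEPa d B α z.2 (f'.1 z.1)) ∂D)) /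
      ENNReal.ofReal (2 * min τ (1 - τ)) := by
  set c := 2 * min τ (1 - τ) with hc
  have hc0 : 0 < c := mul_pos two_pos (lt_min hτ0 (by linarith))
  have hcτ : c ≤ 2 * τ := by linarith [min_le_left τ (1 - τ)]
  have hcτ' : c ≤ 2 * (1 - τ) := by linarith [min_le_right τ (1 - τ)]
  have hc2 : c < 2 := by linarith
  have h2 : ENNReal.ofReal c + ENNReal.ofReal (2 - c) = 2 := by
    rw [← ENNReal.ofReal_add hc0.le (by linarith)]
    simp
  set A := ∫⁻ z, ENNReal.ofReal (abstainLoss (2 ^ d) α z.2 (predBEP d B τ (f z.1))) ∂D with hA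
  set A' := ⨅ h : {h : X → Fin (2 ^ d + 1) // Measurable h},
    ∫⁻ z, ENNReal.ofReal (abstainLoss (2 ^ d) α z.2 (h.1 z.1)) ∂D with hA'
  set S := ∫⁻ z, ENNReal.ofReal (psiBEPa d B α z.2 (f z.1)) ∂D with hS
  set S' := ⨅ f' : {f' : X → Fin d → ℝ // Measurable f'},
    ∫⁻ z, ENNReal.ofReal (psiBEPa d B α z.2 (f'.1 z.1)) ∂D with hS'
  have hpred : Measurable fun x => predBEP d B τ (f x) := (measurable_predBEP B τ).comp hf
  have hA'A : A' ≤ A := iInf_le_of_le ⟨_, hpred⟩ le_rfl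
  have hS'A' : S' ≤ 2 * A' := by
    rw [hA', ENNReal.mul_iInf_of_ne (by simp) (by simp)]
    refine le_iInf fun h => iInf_le_of_le
      ⟨fun x => scoreBEP d B (h.1 x), Measurable.of_discrete.comp h.2⟩ ?_
    rw [← lintegral_const_mul' _ _ (by simp)]
    refine lintegral_mono fun z => ?_
    rw [← ENNReal.ofReal_ofNat 2, ← ENNReal.ofReal_mul (by norm_num)]
    exact ENNReal.ofReal_le_ofReal (psiBEPa_scoreBEP_le hd B hα0 hα1 _ _)
  have hA'top : A' ≠ ⊤ := by
    refine ne_top_of_le_ne_top ENNReal.ofReal_ne_top (b := ENNReal.ofReal α)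
      (iInf_le_of_le ⟨fun _ => Fin.last _, measurable_const⟩ ?_)
    simp [abstainLoss]
  have hS'top : S' ≠ ⊤ := ne_top_of_le_ne_top (ENNReal.mul_ne_top (by simp) hA'top) hS'A'
  have hq : Measurable fun x => ⨅ j, |f x j| :=
    .iInf fun j => ((measurable_pi_apply j).comp hf).abs
  have hmix (x : X) : mixWeight c τ (⨅ j, |f x j|) ∈ Set.Icc 0 1 :=
    mixWeight_mem_Icc hc0 hcτ hcτ' (Real.iInf_nonneg fun j => abs_nonneg _)
  have key : ENNReal.ofReal c * A + ENNReal.ofReal (2 - c) * A' ≤ S := by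
    have hrand := iInf_lintegral_le_lintegral_mix D
      (fun y t => ENNReal.ofReal (abstainLoss (2 ^ d) α y t))
      ((measurable_mixWeight c τ).comp hq) (fun x => (hmix x).1) (fun x => (hmix x).2)
      ((Measurable.of_discrete (f := fun b => (B.symm b).castSucc)).comp
        ((measurable_signNeg d).comp hf)) (measurable_const (a := Fin.last (2 ^ d)))
    refine (add_le_add_right (mul_le_mul_right hrand _) _).trans ?_
    have hLm : Measurable fun p : Fin (2 ^ d) × Fin (2 ^ d + 1) =>
      ENNReal.ofReal (abstainLoss (2 ^ d) α p.1 p.2) := Measurable.of_discrete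
    have hLf : Measurable fun z : X × Fin (2 ^ d) =>
        ENNReal.ofReal (abstainLoss (2 ^ d) α z.2 (predBEP d B τ (f z.1))) :=
      hLm.comp (measurable_snd.prodMk (hpred.comp measurable_fst))
    rw [hA, ← lintegral_const_mul' _ _ (by simp), ← lintegral_const_mul' _ _ (by simp),
      ← lintegral_add_left (hLf.const_mul _)]
    refine lintegral_mono fun z => ?_
    have hw := hmix z.1
    have hL (t) := abstainLoss_nonneg hα0 z.2 t
    have hw1 := sub_nonneg.2 hw.2
    have hc2' : 0 ≤ 2 - c := by linarith
    simp only [Function.comp_apply]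
    rw [← ENNReal.ofReal_mul hw.1, ← ENNReal.ofReal_mul hw1,
      ← ENNReal.ofReal_add (mul_nonneg hw.1 (hL _)) (mul_nonneg hw1 (hL _)),
      ← ENNReal.ofReal_mul hc2', ← ENNReal.ofReal_mul hc0.le,
      ← ENNReal.ofReal_add (mul_nonneg hc0.le (hL _)) (mul_nonneg hc2'
        (add_nonneg (mul_nonneg hw.1 (hL _)) (mul_nonneg hw1 (hL _))))]
    exact ENNReal.ofReal_le_ofReal (mix_le_psiBEPa hd B hα0 hα1 τ hc2 _ _)
  rw [ENNReal.le_div_iff_mul_le (.inl (by simpa using hc0)) (.inl ENNReal.ofReal_ne_top)]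
  refine ENNReal.le_sub_of_add_le_right hS'top ?_
  calc (A - A') * ENNReal.ofReal c + S'
      ≤ (A - A') * ENNReal.ofReal c + (ENNReal.ofReal c + ENNReal.ofReal (2 - c)) * A' := by
        rw [h2]
        gcongr
    _ = ENNReal.ofReal c * (A - A' + A') + ENNReal.ofReal (2 - c) * A' := by ring
    _ = ENNReal.ofReal c * A + ENNReal.ofReal (2 - c) * A' := by rw [tsub_add_cancel_of_le hA'A]
    _ ≤ S := key
end
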